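/- arXiv:1005.3876 — 2 statements merged into one kernel-verified Lean document; each statement's English description precedes it below -/
import Mathlib

section
/- Let G be a finite group, H ≤ G a subgroup, and n ≥ 1 an integer. Then |Hom(ℤ^n, G)| · |H|^n ≤ |Hom(ℤ^n, H)| · |G|^n and |Hom(ℤ^n, H)| ≤ |G:H|^n · |Hom(ℤ^n, G)| (equivalently, |G:H|^{−2n} P_2(H,n) ≤ P_2(G,n) ≤ P_2(H,n), where P_2(G,n) = |Hom(ℤ^n,G)|/|G|^n). -/
/-!
Requiring one more entry `t a` of a commuting tuple to lie in a subgroup `H` costs a factor of at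
most `|G : H|`: once the other entries are fixed, the admissible values of `t a` form a subgroup `K`
(the centralizer of the entries that `t a` has to commute with), and `|K| |H| ≤ |K ∩ H| |G|`.
-/

open Function

/-- The tuples in `G` whose entries `t i` and `t j` commute whenever `r i j`. They correspond to
the homomorphisms to `G` from the right-angled Artin group with generators `ι` and commutation
relations `r`; the group is `ℤ^n` when `ι = Fin n` and `r` always holds. -/
def commutingTuples {ι : Type*} (G : Type*) [Mul G] (r : ι → ι → Prop) : Set (ι → G) :=
  {t | ∀ i j, r i j → Commute (t i) (t j)}

theorem card_mul_card_le_card_inf_mul_card {G : Type*} [Group G] [Finite G] (K H : Subgroup G) :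
    Nat.card K * Nat.card H ≤ Nat.card ↥(K ⊓ H) * Nat.card G := by
  have hindex : H.relIndex K ≤ H.index :=
    H.relIndex_top_right ▸ Subgroup.relIndex_le_of_le_right le_top
      (H.relIndex_top_right ▸ H.index_ne_zero_of_finite)
  have hK : Nat.card ↥(K ⊓ H) * H.relIndex K = Nat.card K := by
    simpa [inf_comm] using Subgroup.relIndex_inf_mul_relIndex ⊥ H K
  calc Nat.card K * Nat.card H = Nat.card ↥(K ⊓ H) * (Nat.card H * H.relIndex K) := by
        rw [← hK]; ring
    _ ≤ Nat.card ↥(K ⊓ H) * (Nat.card H * H.index) := by gcongr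
    _ = Nat.card ↥(K ⊓ H) * Nat.card G := by rw [H.card_mul_index]

section Update

variable {ι : Type*} {α : ι → Type*} [DecidableEq ι]

theorem piSplitAt_symm_eq_update (a : ι) (t : ∀ i, α i) (x : α a) :
    (Equiv.piSplitAt a α).symm (x, fun j => t j) = update t a x := by
  ext j
  obtain rfl | hj := eq_or_ne j a
  · simp
  · simp [hj]

theorem ncard_eq_sum_ncard_piSplitAt (a : ι) [Finite (α a)]
    [Fintype (∀ j : {j // j ≠ a}, α j)] (X : Set (∀ i, α i)) :
    X.ncard = ∑ b, {x | (Equiv.piSplitAt a α).symm (x, b) ∈ X}.ncard := by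
  let e : X ≃ Σ b, {x | (Equiv.piSplitAt a α).symm (x, b) ∈ X} :=
    ((Equiv.piSplitAt a α).trans (Equiv.prodComm _ _)).subtypeEquivOfSubtype'.trans
      (Equiv.subtypeProdEquivSigmaSubtype fun b x => (Equiv.piSplitAt a α).symm (x, b) ∈ X)
  simp only [← Nat.card_coe_set_eq, Nat.card_congr e, Nat.card_sigma]

theorem ncard_mul_le_ncard_mul_of_update [Finite ι] [∀ i, Finite (α i)] {X Y : Set (∀ i, α i)}
    {a : ι} {m n : ℕ}
    (h : ∀ t ∈ X, {x | update t a x ∈ X}.ncard * m ≤ {x | update t a x ∈ Y}.ncard * n) :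
    X.ncard * m ≤ Y.ncard * n := by
  have := Fintype.ofFinite (∀ j : {j // j ≠ a}, α j)
  rw [ncard_eq_sum_ncard_piSplitAt a X, ncard_eq_sum_ncard_piSplitAt a Y, Finset.sum_mul,
    Finset.sum_mul]
  refine Finset.sum_le_sum fun b _ => ?_
  obtain hempty | ⟨x₀, hx₀⟩ := {x | (Equiv.piSplitAt a α).symm (x, b) ∈ X}.eq_empty_or_nonempty
  · simp [hempty]
  · obtain ⟨t, rfl⟩ : ∃ t : ∀ i, α i, b = fun j : {j // j ≠ a} => t j :=
      ⟨(Equiv.piSplitAt a α).symm (x₀, b), by ext j; simp [j.2]⟩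
    simp only [piSplitAt_symm_eq_update, Set.mem_ofPred_eq] at hx₀ ⊢
    simpa only [update_idem] using h _ hx₀

end Update

section Group

variable {ι G : Type*} [Group G]

theorem update_mem_commutingTuples_iff [DecidableEq ι] {r : ι → ι → Prop} {t : ι → G}
    (ht : t ∈ commutingTuples G r) (a : ι) (x : G) :
    update t a x ∈ commutingTuples G r ↔
      x ∈ Subgroup.centralizer (t '' {j | j ≠ a ∧ (r a j ∨ r j a)}) := by
  rw [Subgroup.mem_centralizer_iff, Set.forall_mem_image]
  constructor
  · rintro hx j ⟨hja, haj | hja'⟩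
    · simpa [hja] using (hx a j haj).symm.eq
    · simpa [hja] using (hx j a hja').eq
  · intro hx i j hij
    by_cases hi : i = a <;> by_cases hj : j = a
    · rw [hi, hj]
    · subst hi
      simpa [hj] using (show Commute (t j) x from hx ⟨hj, .inl hij⟩).symm
    · subst hj
      simpa [hi] using (show Commute (t i) x from hx ⟨hi, .inr hij⟩)
    · simpa [hi, hj] using ht i j hij

variable [Finite ι] [Finite G]

theorem ncard_commutingTuples_inter_pi_mul_card_le (r : ι → ι → Prop) (H : ι → Subgroup G)
    {s : Set ι} {a : ι} (ha : a ∉ s) :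
    (commutingTuples G r ∩ s.pi fun i => H i).ncard * Nat.card (H a) ≤
      (commutingTuples G r ∩ (insert a s).pi fun i => H i).ncard * Nat.card G := by
  classical
  refine ncard_mul_le_ncard_mul_of_update (a := a) fun t ⟨ht, hts⟩ => ?_
  have hpi (x : G) : update t a x ∈ s.pi fun i => (H i : Set G) :=
    (Set.update_mem_pi_iff_of_mem hts).2 fun has => absurd has ha
  let K := Subgroup.centralizer (t '' {j | j ≠ a ∧ (r a j ∨ r j a)})
  have hK : {x | update t a x ∈ commutingTuples G r ∩ s.pi fun i => H i} = K := by
    ext x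
    simp only [Set.mem_ofPred_eq, Set.mem_inter_iff, hpi, and_true,
      update_mem_commutingTuples_iff ht, K, SetLike.mem_coe]
  have hKH : {x | update t a x ∈ commutingTuples G r ∩ (insert a s).pi fun i => H i} =
      ↑(K ⊓ H a) := by
    ext x
    simp only [Set.mem_ofPred_eq, Set.mem_inter_iff, Set.insert_pi, Set.mem_preimage, eval,
      update_self, hpi, and_true, update_mem_commutingTuples_iff ht, K, SetLike.mem_coe,
      Subgroup.mem_inf]
  rw [hK, hKH]
  exact card_mul_card_le_card_inf_mul_card K (H a)

theorem ncard_commutingTuples_mul_prod_card_le (r : ι → ι → Prop) (H : ι → Subgroup G)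
    (s : Finset ι) :
    (commutingTuples G r).ncard * ∏ i ∈ s, Nat.card (H i) ≤
      (commutingTuples G r ∩ (s : Set ι).pi fun i => H i).ncard * Nat.card G ^ s.card := by
  classical
  induction s using Finset.induction_on with
  | empty => simp
  | insert a s ha ih =>
    rw [Finset.prod_insert ha, Finset.card_insert_of_notMem ha, Finset.coe_insert]
    calc (commutingTuples G r).ncard * (Nat.card (H a) * ∏ i ∈ s, Nat.card (H i))
        = (commutingTuples G r).ncard * (∏ i ∈ s, Nat.card (H i)) * Nat.card (H a) := by ring
      _ ≤ (commutingTuples G r ∩ (s : Set ι).pi fun i => H i).ncard * Nat.card G ^ s.card *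
          Nat.card (H a) := by gcongr
      _ = (commutingTuples G r ∩ (s : Set ι).pi fun i => H i).ncard * Nat.card (H a) *
          Nat.card G ^ s.card := by ring
      _ ≤ (commutingTuples G r ∩ (insert a (s : Set ι)).pi fun i => H i).ncard * Nat.card G *
          Nat.card G ^ s.card :=
        Nat.mul_le_mul_right _ (ncard_commutingTuples_inter_pi_mul_card_le r H (mod_cast ha))
      _ = (commutingTuples G r ∩ (insert a (s : Set ι)).pi fun i => H i).ncard *
          Nat.card G ^ (s.card + 1) := by ring

end Group

theorem card_commute_eq_ncard_commutingTuples_inter_pi {ι G : Type*} [Group G]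
    (r : ι → ι → Prop) (H : ι → Subgroup G) :
    Nat.card {t : ∀ i, H i // ∀ i j, r i j → Commute (t i : G) (t j)} =
      (commutingTuples G r ∩ Set.univ.pi fun i => H i).ncard :=
  Nat.card_congr
    { toFun t := ⟨fun i => t.1 i, t.2, fun i _ => (t.1 i).2⟩
      invFun t := ⟨fun i => ⟨t.1 i, t.2.2 i trivial⟩, t.2.1⟩ }

/-- The tuples with `t i ∈ H i` are written as elements of `∀ i, H i`, so that for constant `H` they
are tuples in a subgroup regarded as a group of its own. -/
theorem stmt_12_general {ι G : Type*} [Group G] [Finite G] [Fintype ι] (r : ι → ι → Prop)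
    (H : ι → Subgroup G) :
    Nat.card {t : ι → G // ∀ i j, r i j → Commute (t i) (t j)} * ∏ i, Nat.card (H i) ≤
        Nat.card {t : ∀ i, H i // ∀ i j, r i j → Commute (t i : G) (t j)} *
          Nat.card G ^ Fintype.card ι ∧
      Nat.card {t : ∀ i, H i // ∀ i j, r i j → Commute (t i : G) (t j)} ≤
        Nat.card {t : ι → G // ∀ i j, r i j → Commute (t i) (t j)} := by
  have hG : Nat.card {t : ι → G // ∀ i j, r i j → Commute (t i) (t j)} =
      (commutingTuples G r).ncard := Nat.card_coe_set_eq _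
  rw [hG, card_commute_eq_ncard_commutingTuples_inter_pi]
  exact ⟨by simpa using ncard_commutingTuples_mul_prod_card_le r H Finset.univ,
    Set.ncard_le_ncard Set.inter_subset_left⟩

/-- Let `G` be a finite group, `H ≤ G`, and `n ≥ 1`.  Then
`|Hom(ℤ^n, G)|·|H|^n ≤ |Hom(ℤ^n, H)|·|G|^n` and
`|Hom(ℤ^n, H)| ≤ |G:H|^n·|Hom(ℤ^n, G)|`; equivalently
`|G:H|^{-2n}·P_2(H,n) ≤ P_2(G,n) ≤ P_2(H,n)` where `P_2(G,n) = |Hom(ℤ^n,G)|/|G|^n`. -/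
theorem stmt_12 {G : Type*} [Group G] [Fintype G] (H : Subgroup G) (n : ℕ) (hn : 1 ≤ n) :
    Nat.card {t : Fin n → G // ∀ i j, Commute (t i) (t j)} * (Nat.card (↥H)) ^ n
        ≤ Nat.card {t : Fin n → ↥H // ∀ i j, Commute (t i) (t j)} * (Nat.card G) ^ n
      ∧ Nat.card {t : Fin n → ↥H // ∀ i j, Commute (t i) (t j)}
        ≤ H.index ^ n * Nat.card {t : Fin n → G // ∀ i j, Commute (t i) (t j)} := by
  have h := stmt_12_general (fun _ _ : Fin n => True) fun _ => H
  simp only [forall_const, Finset.prod_const, Finset.card_univ, Fintype.card_fin,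
    Submonoid.commute_coe_coe] at h
  exact h.imp_right fun hle => hle.trans (Nat.le_mul_of_pos_left _
    (pow_pos (Nat.pos_of_ne_zero H.index_ne_zero_of_finite) n))
end

section
/- Let G be a finite nonabelian group, let c = max{ |C_G(x)| : x ∈ G \ Z(G) } be the largest order of the centralizer of a noncentral element, and let p be the smallest prime divisor of the index |G : Z(G)|. Then for every integer n ≥ 1, p^n · |Hom(ℤ^{n+1}, G)| ≤ (p^n + p^{n−1} + ⋯ + p + 1) · c^n · |G| (equivalently, P_2(G, n+1) ≤ (p^n + ⋯ + p + 1)·c^n / (p^n·|G|^n), where P_2(G,s) = |Hom(ℤ^s,G)|/|G|^s). -/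
/-!
The first entry `x` of a commuting `(k + 1)`-tuple is arbitrary, and the other entries form a
commuting `k`-tuple in the centralizer of `x`. If `x` is central this gives `|Hom(ℤ^k, G)|`
possibilities, and otherwise at most `c ^ k`. Hence
`|Hom(ℤ^(k+1), G)| ≤ |Z(G)| * |Hom(ℤ^k, G)| + |G| * c ^ k`. The center is a proper subgroup of the
centralizer of any noncentral element, so `p * |Z(G)| ≤ c`, and the recursion sums up to a geometric
series.
-/

/-- The set of commuting `k`-tuples in `G`, that is, `Hom(ℤ^k, G)` when `G` is a group. -/
abbrev CommutingTuple (k : ℕ) (G : Type*) [Mul G] : Type _ :=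
  {t : Fin k → G // ∀ i j, Commute (t i) (t j)}

namespace CommutingTuple

section Mul

variable {G H : Type*} [Mul G] [Mul H]

lemma card_le_card_of_injective [Finite G] (k : ℕ) (f : H →ₙ* G) (hf : Function.Injective f) :
    Nat.card (CommutingTuple k H) ≤ Nat.card (CommutingTuple k G) :=
  Nat.card_le_card_of_injective
    (fun t ↦ ⟨f ∘ t.1, fun i j ↦ (t.2 i j).map f⟩ : CommutingTuple k H → CommutingTuple k G)
    fun _ _ hst ↦ Subtype.ext (hf.comp_left (congrArg Subtype.val hst))

lemma card_le_card_pow [Finite G] (k : ℕ) :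
    Nat.card (CommutingTuple k G) ≤ Nat.card G ^ k := by
  simpa only [Nat.card_fun, Nat.card_fin] using
    Finite.card_subtype_le fun t : Fin k → G ↦ ∀ i j, Commute (t i) (t j)

end Mul

variable {G : Type*} [Group G]

/-- Splitting off the first entry `x` of a commuting tuple leaves a commuting tuple in the
centralizer of `x`. -/
def consEquiv (k : ℕ) (G : Type*) [Group G] :
    CommutingTuple (k + 1) G ≃
      Σ x : G, CommutingTuple k (Subgroup.centralizer ({x} : Set G)) where
  toFun t := ⟨t.1 0,
    fun i ↦ ⟨t.1 i.succ, Subgroup.mem_centralizer_singleton_iff.2 (t.2 i.succ 0)⟩,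
    fun i j ↦ Subtype.ext (t.2 i.succ j.succ)⟩
  invFun s := ⟨Fin.cons s.1 fun i ↦ (s.2.1 i : G), by
    have commute_head (i : Fin k) : Commute (s.2.1 i : G) s.1 :=
      Subgroup.mem_centralizer_singleton_iff.1 (s.2.1 i).2
    have commute_tail (i j : Fin k) : Commute (s.2.1 i : G) (s.2.1 j) :=
      congrArg Subtype.val (s.2.2 i j)
    refine Fin.cases (Fin.cases (.refl _) fun j ↦ ?_) fun i ↦ Fin.cases ?_ fun j ↦ ?_
    · exact (commute_head j).symm
    · exact commute_head i
    · exact commute_tail i j⟩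
  left_inv t := Subtype.ext (Fin.cons_self_tail t.1)
  right_inv _ := rfl

lemma card_succ [Fintype G] (k : ℕ) :
    Nat.card (CommutingTuple (k + 1) G) =
      ∑ x : G, Nat.card (CommutingTuple k (Subgroup.centralizer ({x} : Set G))) := by
  rw [Nat.card_congr (consEquiv k G), Nat.card_sigma]

lemma card_succ_le [Finite G] {c : ℕ}
    (hc : ∀ x ∉ Subgroup.center G, Nat.card (Subgroup.centralizer ({x} : Set G)) ≤ c) (k : ℕ) :
    Nat.card (CommutingTuple (k + 1) G) ≤
      Nat.card (Subgroup.center G) * Nat.card (CommutingTuple k G) + Nat.card G * c ^ k := by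
  classical
  have := Fintype.ofFinite G
  have centralizer_le (x : G) : Nat.card (CommutingTuple k (Subgroup.centralizer {x})) ≤
      Nat.card (CommutingTuple k G) :=
    card_le_card_of_injective k (Subgroup.centralizer {x}).subtype.toMulHom
      Subtype.val_injective
  have noncentral_le (x : G) (hx : x ∉ Subgroup.center G) :
      Nat.card (CommutingTuple k (Subgroup.centralizer {x})) ≤ c ^ k :=
    (card_le_card_pow k).trans (Nat.pow_le_pow_left (hc x hx) k)
  calc Nat.card (CommutingTuple (k + 1) G)
    _ = ∑ x : {x // x ∈ Subgroup.center G},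
            Nat.card (CommutingTuple k (Subgroup.centralizer {x.1})) +
          ∑ x : {x // x ∉ Subgroup.center G},
            Nat.card (CommutingTuple k (Subgroup.centralizer {x.1})) := by
      rw [card_succ, ← Fintype.sum_subtype_add_sum_subtype (· ∈ Subgroup.center G)]
    _ ≤ ∑ _x : {x // x ∈ Subgroup.center G}, Nat.card (CommutingTuple k G) +
          ∑ _x : {x // x ∉ Subgroup.center G}, c ^ k :=
      add_le_add (Finset.sum_le_sum fun x _ ↦ centralizer_le x)
        (Finset.sum_le_sum fun x _ ↦ noncentral_le x x.2)
    _ = Nat.card (Subgroup.center G) * Nat.card (CommutingTuple k G) +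
          Nat.card {x // x ∉ Subgroup.center G} * c ^ k := by
      simp only [Finset.sum_const, Finset.card_univ, smul_eq_mul, Nat.card_eq_fintype_card]
    _ ≤ Nat.card (Subgroup.center G) * Nat.card (CommutingTuple k G) + Nat.card G * c ^ k := by
      gcongr
      exact Finite.card_subtype_le _

theorem pow_mul_card_succ_le [Finite G] {c p : ℕ}
    (hc : ∀ x ∉ Subgroup.center G, Nat.card (Subgroup.centralizer ({x} : Set G)) ≤ c)
    (hp : p * Nat.card (Subgroup.center G) ≤ c) (n : ℕ) :
    p ^ n * Nat.card (CommutingTuple (n + 1) G) ≤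
      (∑ i ∈ Finset.range (n + 1), p ^ i) * c ^ n * Nat.card G := by
  induction n with
  | zero => simpa using card_le_card_pow (G := G) 1
  | succ n ih =>
    calc p ^ (n + 1) * Nat.card (CommutingTuple (n + 2) G)
      _ ≤ p ^ (n + 1) * (Nat.card (Subgroup.center G) * Nat.card (CommutingTuple (n + 1) G) +
            Nat.card G * c ^ (n + 1)) := by
        gcongr
        exact card_succ_le hc (n + 1)
      _ = p * Nat.card (Subgroup.center G) * (p ^ n * Nat.card (CommutingTuple (n + 1) G)) +
            p ^ (n + 1) * (Nat.card G * c ^ (n + 1)) := by ring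
      _ ≤ c * ((∑ i ∈ Finset.range (n + 1), p ^ i) * c ^ n * Nat.card G) +
            p ^ (n + 1) * (Nat.card G * c ^ (n + 1)) := by gcongr
      _ = (∑ i ∈ Finset.range (n + 2), p ^ i) * c ^ (n + 1) * Nat.card G := by
        rw [Finset.sum_range_succ _ (n + 1)]
        ring

end CommutingTuple

lemma minFac_index_mul_card_le_card_of_lt {G : Type*} [Group G] {K H : Subgroup G} [Finite H]
    (hKH : K < H) : K.index.minFac * Nat.card K ≤ Nat.card H := by
  have two_le_relIndex : 2 ≤ K.relIndex H := by
    have ne_zero : K.relIndex H ≠ 0 := Subgroup.index_ne_zero_of_finite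
    have ne_one : K.relIndex H ≠ 1 := mt Subgroup.relIndex_eq_one.1 hKH.not_ge
    lia
  calc K.index.minFac * Nat.card K
    _ ≤ K.relIndex H * Nat.card K := by
      gcongr
      exact Nat.minFac_le_of_dvd two_le_relIndex (Subgroup.relIndex_dvd_index_of_le hKH.le)
    _ = Nat.card H := by
      rw [mul_comm, ← Subgroup.relIndex_bot_left,
        Subgroup.relIndex_mul_relIndex _ _ _ bot_le hKH.le, Subgroup.relIndex_bot_left]

lemma center_lt_centralizer_singleton {G : Type*} [Group G] {x : G}
    (hx : x ∉ Subgroup.center G) : Subgroup.center G < Subgroup.centralizer {x} :=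
  SetLike.lt_iff_le_and_exists.2
    ⟨Subgroup.center_le_centralizer _, x, Subgroup.mem_centralizer_singleton_iff.2 rfl, hx⟩

/-- Let `G` be a finite nonabelian group, `c` the largest order of the
centralizer of a noncentral element, and `p` the smallest prime divisor of `|G : Z(G)|`.
Then for every `n ≥ 1`,
`p^n·|Hom(ℤ^{n+1}, G)| ≤ (p^n + ⋯ + p + 1)·c^n·|G|`; equivalently
`P_2(G,n+1) ≤ (p^n + ⋯ + p + 1)·c^n/(p^n·|G|^n)`. -/
theorem stmt_16 {G : Type*} [Group G] [Fintype G]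
    (hna : ∃ a b : G, a * b ≠ b * a)
    (c : ℕ)
    (hc : IsGreatest {m : ℕ | ∃ x : G, x ∉ Subgroup.center G ∧
      m = Nat.card (↥(Subgroup.centralizer ({x} : Set G)))} c)
    (p : ℕ)
    (hp : IsLeast {q : ℕ | q.Prime ∧ q ∣ (Subgroup.center G).index} p)
    (n : ℕ) (hn : 1 ≤ n) :
    p ^ n * Nat.card {t : Fin (n + 1) → G // ∀ i j, Commute (t i) (t j)}
      ≤ (∑ i ∈ Finset.range (n + 1), p ^ i) * c ^ n * Nat.card G := by
  obtain ⟨⟨x, hx, rfl⟩, hmax⟩ := hc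
  have index_ne_one : (Subgroup.center G).index ≠ 1 := fun h ↦
    hx (Subgroup.index_eq_one.1 h ▸ Subgroup.mem_top x)
  have p_le_minFac : p ≤ (Subgroup.center G).index.minFac :=
    hp.2 ⟨Nat.minFac_prime index_ne_one, Nat.minFac_dvd _⟩
  exact CommutingTuple.pow_mul_card_succ_le (fun y hy ↦ hmax ⟨y, hy, rfl⟩)
    ((Nat.mul_le_mul_right _ p_le_minFac).trans
      (minFac_index_mul_card_le_card_of_lt (center_lt_centralizer_singleton hx))) n
end
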